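/- arXiv:2605.26489 — 2 statements merged into one kernel-verified Lean document; each statement's English description precedes it below -/
import Mathlib

section
/- Let a, b ∈ ℝⁿ with α = ‖a‖₁ > 0 and β = ‖b‖₁ > 0. Then ‖a/α − b/β‖₂ ≤ ((1+√n)/min{α, β}) · ‖a − b‖₂. -/
/-!
Write `a/α − b/β = (a − b)/α + (1/α − 1/β) b`. The second term has norm
`(|β − α|/α) · (‖b‖₂/β)`; here `‖b‖₂ ≤ ‖b‖₁ = β` (`norm_le_sum_abs`), and
`|β − α| ≤ ‖a − b‖₁ ≤ √n ‖a − b‖₂` by the triangle inequality and Cauchy–Schwarz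
(`sum_abs_le_sqrt_mul_norm`). So the bound already holds with `α` in place of `min {α, β}`.
-/

lemma norm_le_sum_abs {n : ℕ} (x : EuclideanSpace ℝ (Fin n)) : ‖x‖ ≤ ∑ i, |x i| := by
  rw [EuclideanSpace.norm_eq]
  apply Real.sqrt_le_iff.mpr
  refine ⟨Finset.sum_nonneg fun i _ => abs_nonneg _, ?_⟩
  simp only [Real.norm_eq_abs]
  exact Finset.sum_sq_le_sq_sum_of_nonneg fun i _ => abs_nonneg _

lemma sum_abs_le_sqrt_mul_norm {n : ℕ} (x : EuclideanSpace ℝ (Fin n)) :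
    ∑ i, |x i| ≤ Real.sqrt n * ‖x‖ := by
  rw [EuclideanSpace.norm_eq, ← Real.sqrt_mul (Nat.cast_nonneg n)]
  apply Real.le_sqrt_of_sq_le
  simpa using sq_sum_le_card_mul_sum_sq (s := Finset.univ) (f := fun i => |x i|)

/-- **ℓ¹-normalization is Lipschitz-like.** For `a, b ∈ ℝⁿ` with ℓ¹ norms `α, β > 0`,
`‖a/α − b/β‖₂ ≤ ((1 + √n)/min{α, β}) · ‖a − b‖₂`, where `‖·‖₂` is the Euclidean norm. -/
theorem l1_normalization_bound {n : ℕ} (a b : EuclideanSpace ℝ (Fin n)) (α β : ℝ)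
    (hα : α = ∑ i, |a i|) (hβ : β = ∑ i, |b i|) (hα0 : 0 < α) (hβ0 : 0 < β) :
    ‖α⁻¹ • a - β⁻¹ • b‖ ≤ ((1 + Real.sqrt n) / min α β) * ‖a - b‖ := by
  have hb : ‖b‖ ≤ β := hβ ▸ norm_le_sum_abs b
  have hd : |β - α| ≤ Real.sqrt n * ‖a - b‖ := by
    refine le_trans ?_ (sum_abs_le_sqrt_mul_norm (a - b))
    rw [hα, hβ, ← Finset.sum_sub_distrib]
    refine (Finset.abs_sum_le_sum_abs _ _).trans (Finset.sum_le_sum fun i _ => ?_)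
    rw [abs_sub_comm]
    exact abs_abs_sub_abs_le_abs_sub (a i) (b i)
  have hsplit : α⁻¹ • a - β⁻¹ • b = α⁻¹ • (a - b) + ((β - α) / (α * β)) • b := by
    have : (β - α) / (α * β) = α⁻¹ - β⁻¹ := by field_simp
    rw [this]
    module
  calc ‖α⁻¹ • a - β⁻¹ • b‖
      ≤ ‖α⁻¹ • (a - b)‖ + ‖((β - α) / (α * β)) • b‖ := hsplit ▸ norm_add_le _ _
    _ = α⁻¹ * ‖a - b‖ + |β - α| / (α * β) * ‖b‖ := by
        rw [norm_smul, norm_smul, Real.norm_eq_abs, Real.norm_eq_abs, abs_div,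
          abs_of_pos (inv_pos.mpr hα0), abs_of_pos (mul_pos hα0 hβ0)]
    _ ≤ α⁻¹ * ‖a - b‖ + Real.sqrt n * ‖a - b‖ / (α * β) * β := by gcongr
    _ = ((1 + Real.sqrt n) / α) * ‖a - b‖ := by field_simp
    _ ≤ ((1 + Real.sqrt n) / min α β) * ‖a - b‖ := by
        have : 0 < min α β := lt_min hα0 hβ0
        gcongr
        exact min_le_left _ _
end

section
/- Let u ∈ ℝᵐ with m ≥ 2 and a = softmax(u). Then the Jacobian J(a) = diag(a) − a aᵀ satisfies ‖J(a)‖₂ ≤ 2(m − 1)·exp(−gap(u)). -/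
/-! The operator norm is at most the Frobenius norm. Put `a = softmax u` and `s = 1 - a jstar`, the
mass off the maximizing index. The `i`-th row of `J(a)` is `a i • (e i - a)`, and for a probability
vector `‖e i - a‖² = (1 - a i)² + ∑_{j ≠ i} a j² ≤ 2 (1 - a i)²`, because a sum of squares of
nonnegative numbers is at most the square of their sum. Hence
`‖J(a)‖² ≤ 2 ∑ i, (a i (1 - a i))²`; the term `i = jstar` is at most `s²`, and the other terms
together are at most `∑_{i ≠ jstar} a i² ≤ s²`. This gives `‖J(a)‖ ≤ 2 s`
(`opNorm2_jacobian_le`). Finally each `a j` with `j ≠ jstar` is at most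
`exp (u j - u jstar) ≤ exp (-gap)` (`softmax_le_exp_neg_gap`), so `s ≤ (m - 1) exp (-gap)`.
-/

/-- The softmax map: `softmax u j = exp(u j) / Σₖ exp(u k)`. -/
noncomputable def softmax {m : ℕ} (u : Fin m → ℝ) : Fin m → ℝ :=
  fun j => Real.exp (u j) / ∑ k, Real.exp (u k)

/-- The gap of `u` at a maximizing index `jstar`:
`gap u jstar = u jstar − max_{j ≠ jstar} u j`. -/
noncomputable def gap {m : ℕ} (u : Fin m → ℝ) (jstar : Fin m) : ℝ :=
  u jstar - sSup (u '' {j | j ≠ jstar})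

/-- Operator 2-norm of a real matrix: the operator norm of the induced linear map
between Euclidean spaces. -/
noncomputable def opNorm2 {m n : ℕ} (A : Matrix (Fin m) (Fin n) ℝ) : ℝ :=
  ‖LinearMap.toContinuousLinearMap (Matrix.toEuclideanLin A)‖

/-- The operator norm is bounded by the Frobenius norm. -/
lemma opNorm2_le_of_sum_sq_le {m n : ℕ} (A : Matrix (Fin m) (Fin n) ℝ) {C : ℝ} (hC : 0 ≤ C)
    (h : ∑ i, ∑ j, A i j ^ 2 ≤ C ^ 2) : opNorm2 A ≤ C := by
  refine ContinuousLinearMap.opNorm_le_bound _ hC fun v => ?_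
  refine abs_le_of_sq_le_sq' ?_ (by positivity) |>.2
  rw [mul_pow, EuclideanSpace.real_norm_sq_eq, EuclideanSpace.real_norm_sq_eq]
  calc _ = ∑ i, (∑ j, A i j * v j) ^ 2 := rfl
    _ ≤ ∑ i, (∑ j, A i j ^ 2) * ∑ j, v j ^ 2 :=
        Finset.sum_le_sum fun i _ => Finset.sum_mul_sq_le_sq_mul_sq _ _ _
    _ = (∑ i, ∑ j, A i j ^ 2) * ∑ j, v j ^ 2 := (Finset.sum_mul _ _ _).symm
    _ ≤ _ := by gcongr

lemma sum_erase_sq_le {m : ℕ} {a : Fin m → ℝ} (ha : ∀ i, 0 ≤ a i) (hsum : ∑ i, a i = 1)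
    (i : Fin m) : ∑ j ∈ Finset.univ.erase i, a j ^ 2 ≤ (1 - a i) ^ 2 := by
  have h : ∑ j ∈ Finset.univ.erase i, a j = 1 - a i := by
    rw [← hsum, ← Finset.add_sum_erase _ a (Finset.mem_univ i)]; ring
  rw [← h]
  exact Finset.sum_sq_le_sq_sum_of_nonneg fun j _ => ha j

/-- For a probability vector `a`, the Jacobian has norm at most twice the mass off any index. -/
lemma opNorm2_jacobian_le {m : ℕ} {a : Fin m → ℝ} (ha : ∀ i, 0 ≤ a i) (hsum : ∑ i, a i = 1)
    (k : Fin m) :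
    opNorm2 (Matrix.diagonal a - Matrix.vecMulVec a a) ≤ 2 * (1 - a k) := by
  have hle : ∀ i, a i ≤ 1 := fun i =>
    hsum ▸ Finset.single_le_sum (fun j _ => ha j) (Finset.mem_univ i)
  refine opNorm2_le_of_sum_sq_le _ (by linarith [hle k]) ?_
  have hrow : ∀ i, ∑ j, (Matrix.diagonal a - Matrix.vecMulVec a a) i j ^ 2
      ≤ 2 * (a i * (1 - a i)) ^ 2 := by
    intro i
    rw [← Finset.add_sum_erase _ _ (Finset.mem_univ i)]
    have h1 : ∑ j ∈ Finset.univ.erase i, (Matrix.diagonal a - Matrix.vecMulVec a a) i j ^ 2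
        = a i ^ 2 * ∑ j ∈ Finset.univ.erase i, a j ^ 2 := by
      rw [Finset.mul_sum]
      refine Finset.sum_congr rfl fun j hj => ?_
      have hij : i ≠ j := (Finset.ne_of_mem_erase hj).symm
      simp [Matrix.vecMulVec_apply, Matrix.diagonal_apply_ne _ hij, mul_pow]
    rw [h1]
    simp only [Matrix.sub_apply, Matrix.diagonal_apply_eq, Matrix.vecMulVec_apply]
    nlinarith [mul_le_mul_of_nonneg_left (sum_erase_sq_le ha hsum i) (sq_nonneg (a i))]
  have hoff : ∑ i ∈ Finset.univ.erase k, 2 * (a i * (1 - a i)) ^ 2 ≤ 2 * (1 - a k) ^ 2 := by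
    rw [← Finset.mul_sum]
    refine mul_le_mul_of_nonneg_left (le_trans (Finset.sum_le_sum fun i _ => ?_)
      (sum_erase_sq_le ha hsum k)) zero_le_two
    exact pow_le_pow_left₀ (mul_nonneg (ha i) (by linarith [hle i]))
      (mul_le_of_le_one_right (ha i) (by linarith [ha i])) 2
  have hk : (a k * (1 - a k)) ^ 2 ≤ (1 - a k) ^ 2 :=
    pow_le_pow_left₀ (mul_nonneg (ha k) (by linarith [hle k]))
      (mul_le_of_le_one_left (by linarith [hle k]) (hle k)) 2
  refine (Finset.sum_le_sum fun i _ => hrow i).trans ?_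
  rw [← Finset.add_sum_erase _ _ (Finset.mem_univ k)]
  linarith

lemma softmax_le_exp_neg_gap {m : ℕ} (u : Fin m → ℝ) {j k : Fin m} (hjk : j ≠ k) :
    softmax u j ≤ Real.exp (-gap u k) := by
  have hZ : Real.exp (u k) ≤ ∑ i, Real.exp (u i) :=
    Finset.single_le_sum (f := fun i => Real.exp (u i)) (fun i _ => (Real.exp_pos _).le)
      (Finset.mem_univ k)
  have hsup : u j ≤ sSup (u '' {j | j ≠ k}) :=
    le_csSup (Set.toFinite _).bddAbove ⟨j, hjk, rfl⟩
  calc softmax u j ≤ Real.exp (u j) / Real.exp (u k) :=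
        div_le_div_of_nonneg_left (Real.exp_pos _).le (Real.exp_pos _) hZ
    _ = Real.exp (u j - u k) := (Real.exp_sub _ _).symm
    _ ≤ _ := Real.exp_le_exp.2 (by unfold gap; linarith)

/-- **Exponential decay of the softmax Jacobian norm.** For `m ≥ 2`, `a = softmax u`,
and `J(a) = diag(a) − a aᵀ`: `‖J(a)‖₂ ≤ 2(m − 1)·exp(−gap(u))`. -/
theorem softmax_jacobian_exp_decay {m : ℕ} (hm : 2 ≤ m) (u : Fin m → ℝ) (jstar : Fin m)
    (hmax : ∀ j, u j ≤ u jstar) :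
    opNorm2 (Matrix.diagonal (softmax u) - Matrix.vecMulVec (softmax u) (softmax u))
      ≤ 2 * ((m : ℝ) - 1) * Real.exp (-(gap u jstar)) := by
  have hZ : 0 < ∑ i, Real.exp (u i) :=
    Finset.sum_pos (fun i _ => Real.exp_pos _) ⟨jstar, Finset.mem_univ _⟩
  have ha : ∀ i, 0 ≤ softmax u i := fun i => div_nonneg (Real.exp_pos _).le hZ.le
  have hsum : ∑ i, softmax u i = 1 := by
    unfold softmax
    rw [← Finset.sum_div, div_self hZ.ne']
  have hoff : 1 - softmax u jstar ≤ ((m : ℝ) - 1) * Real.exp (-gap u jstar) := by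
    have h := Finset.sum_le_card_nsmul (Finset.univ.erase jstar) (softmax u) _
      fun j hj => softmax_le_exp_neg_gap u (Finset.ne_of_mem_erase hj)
    rw [Finset.card_erase_of_mem (Finset.mem_univ _), Finset.card_univ, Fintype.card_fin,
      nsmul_eq_mul, Nat.cast_sub (by omega), Nat.cast_one] at h
    rw [← Finset.add_sum_erase _ _ (Finset.mem_univ jstar)] at hsum
    linarith
  linarith [opNorm2_jacobian_le ha hsum jstar]
end
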